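/- Let (N, 𝔖) be a regular set system with |N| = n ≥ 1, let v be a capacity on 𝔖 with v ≢ v*, and for 0 < λ < 1 define the capacity v_λ := (1 − λ)v + λv*. Then λ ↦ H(v_λ) is strictly increasing on (0, 1). -/

import Mathlib

open Finset

variable {α : Type*} [DecidableEq α] [Fintype α]

/-- `c = (c 0, …, c m)` is a maximal chain of the set system `S`:
`∅ = c 0 ⊊ c 1 ⊊ ⋯ ⊊ c m = N`, each `c i ∈ S`, and no element of `S` lies strictly
between consecutive elements. Its length is `m`. -/
def IsMaxChainOf (S : Finset (Finset α)) (m : ℕ) (c : Fin (m + 1) → Finset α) : Prop :=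
  c 0 = ∅ ∧ c (Fin.last m) = Finset.univ ∧ (∀ i, c i ∈ S) ∧
    (∀ i : Fin m, c i.castSucc ⊂ c i.succ) ∧
    (∀ i : Fin m, ∀ x ∈ S, ¬(c i.castSucc ⊂ x ∧ x ⊂ c i.succ))

/-- `(N, S)` is a regular set system: `∅, N ∈ S` and every maximal chain has length `|N|`. -/
def IsRegularSetSystem (S : Finset (Finset α)) : Prop :=
  ∅ ∈ S ∧ Finset.univ ∈ S ∧
    ∀ (m : ℕ) (c : Fin (m + 1) → Finset α), IsMaxChainOf S m c → m = Fintype.card α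

/-- A capacity on the set system `S`: a `[0,1]`-valued, monotone set function
with `v ∅ = 0` and `v N = 1`. -/
def IsCapacity (S : Finset (Finset α)) (v : Finset α → ℝ) : Prop :=
  v ∅ = 0 ∧ v Finset.univ = 1 ∧ (∀ A ∈ S, 0 ≤ v A ∧ v A ≤ 1) ∧
    ∀ A ∈ S, ∀ B ∈ S, A ⊆ B → v A ≤ v B

/-- `h(x) = -x log₂ x` (with the convention `0 log 0 = 0`, satisfied by `Real.logb`). -/
noncomputable def hfun (x : ℝ) : ℝ := -(x * Real.logb 2 x)

/-- Shannon entropy of a probability distribution. -/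
noncomputable def shannonEntropy {m : ℕ} (p : Fin m → ℝ) : ℝ := ∑ i, hfun (p i)

/-- The increment distribution `p^{v,C}` along a chain `c`. -/
def chainDist (v : Finset α → ℝ) {m : ℕ} (c : Fin (m + 1) → Finset α) : Fin m → ℝ :=
  fun i => v (c i.succ) - v (c i.castSucc)

/-- The maximal chains of `S` (of length `|N|`; in a regular set system these are
all the maximal chains). -/
noncomputable def maxChains (S : Finset (Finset α)) :
    Finset (Fin (Fintype.card α + 1) → Finset α) :=
  @Finset.filter _ (fun c => IsMaxChainOf S (Fintype.card α) c) (Classical.decPred _)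
    Finset.univ

/-- The entropy `H(v)` of a capacity `v` on a regular set system. -/
noncomputable def capEntropy (S : Finset (Finset α)) (v : Finset α → ℝ) : ℝ :=
  (1 / ((maxChains S).card : ℝ)) * ∑ c ∈ maxChains S, shannonEntropy (chainDist v c)

/-! Along a maximal chain `c`, the increments of `v_λ` trace the segment from `p^{v,c}` to the
uniform distribution. Shannon entropy is strictly concave on the simplex and, by Jensen, maximal at
the uniform distribution; a strictly concave function is strictly increasing along every nontrivial
segment ending at a maximizer. So each term of the average defining `H(v_λ)` is strictly increasing,
or constant if `p^{v,c}` is already uniform. The latter cannot happen for every chain: regularity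
puts a set `A` with `v A ≠ |A| / n` on a chain of length `n`, and since such a chain grows by one
element at a time, uniform increments along it would give `v A = |A| / n`.
-/

section StrictConcave

variable {𝕜 E β ι : Type*}

section Semiring

variable [CommSemiring 𝕜] [PartialOrder 𝕜] [AddCommMonoid E] [Module 𝕜 E]
  [AddCommMonoid β] [PartialOrder β] [Module 𝕜 β]

theorem strictConcaveOn_const_smul [PosSMulStrictMono 𝕜 β] {s : Set E} {f : E → β} {c : 𝕜}
    (hc : 0 < c) (hf : StrictConcaveOn 𝕜 s f) : StrictConcaveOn 𝕜 s fun x => c • f x := by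
  refine ⟨hf.1, fun x hx y hy hxy a b ha hb hab => ?_⟩
  simpa only [smul_add, smul_comm c] using smul_lt_smul_of_pos_left (hf.2 hx hy hxy ha hb hab) hc

theorem strictConcaveOn_sum_apply [Fintype ι] [IsOrderedCancelAddMonoid β] {s : Set E} {f : E → β}
    (hf : StrictConcaveOn 𝕜 s f) :
    StrictConcaveOn 𝕜 (Set.univ.pi fun _ : ι => s) fun p => ∑ i, f (p i) := by
  refine ⟨convex_pi fun _ _ => hf.1, fun p hp q hq hpq a b ha hb hab => ?_⟩
  obtain ⟨i, hi⟩ := Function.ne_iff.1 hpq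
  rw [smul_sum, smul_sum, ← sum_add_distrib]
  exact sum_lt_sum
    (fun j _ => hf.concaveOn.2 (hp j trivial) (hq j trivial) ha.le hb.le hab)
    ⟨i, mem_univ i, hf.2 (hp i trivial) (hq i trivial) hi ha hb hab⟩

end Semiring

theorem strictConcaveOn_comp_affineMap {F : Type*} [CommRing 𝕜] [PartialOrder 𝕜]
    [AddCommGroup E] [Module 𝕜 E] [AddCommGroup F] [Module 𝕜 F]
    [AddCommMonoid β] [PartialOrder β] [Module 𝕜 β] {s : Set F} {f : F → β}
    (hf : StrictConcaveOn 𝕜 s f) {g : E →ᵃ[𝕜] F} (hg : Function.Injective g) :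
    StrictConcaveOn 𝕜 (g ⁻¹' s) (f ∘ g) :=
  ⟨hf.1.affine_preimage g, fun x hx y hy hxy a b ha hb hab => by
    simpa [Convex.combo_affine_apply hab] using hf.2 hx hy (hg.ne hxy) ha hb hab⟩

section LinearOrderedField

variable [Field 𝕜] [LinearOrder 𝕜] [IsStrictOrderedRing 𝕜] [AddCommGroup E] [Module 𝕜 E]
  [AddCommGroup β] [Module 𝕜 β]

theorem sum_le_card_smul_map_average [PartialOrder β] [IsOrderedAddMonoid β]
    [IsStrictOrderedModule 𝕜 β] [Fintype ι] {s : Set E} {f : E → β} (hf : ConcaveOn 𝕜 s f)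
    {p : ι → E} (hp : ∀ i, p i ∈ s) :
    ∑ i, f (p i) ≤ (Fintype.card ι : 𝕜) • f ((Fintype.card ι : 𝕜)⁻¹ • ∑ i, p i) := by
  cases isEmpty_or_nonempty ι
  · simp
  have hcard : (0 : 𝕜) < Fintype.card ι := Nat.cast_pos.2 Fintype.card_pos
  have jensen := hf.le_map_sum (t := univ) (w := fun _ => (Fintype.card ι : 𝕜)⁻¹)
    (fun _ _ => by positivity) (by simp [hcard.ne']) fun i _ => hp i
  rwa [← smul_sum, ← smul_sum, inv_smul_le_iff_of_pos hcard] at jensen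

variable [LinearOrder β] [IsOrderedAddMonoid β] [PosSMulStrictMono 𝕜 β]

theorem strictMonoOn_inter_Iic_of_isMaxOn {s : Set 𝕜} {f : 𝕜 → β} {m : 𝕜}
    (hf : StrictConcaveOn 𝕜 s f) (hm : m ∈ s) (hmax : IsMaxOn f s m) :
    StrictMonoOn f (s ∩ Set.Iic m) := by
  rintro a ⟨ha, -⟩ b ⟨-, hbm : b ≤ m⟩ hab
  have ham := hab.trans_le hbm
  rcases hbm.eq_or_lt with rfl | hbm
  · have hval_ne : f a ≠ f b := fun h =>
      hab.ne (hf.eq_of_isMaxOn (fun x hx => (hmax hx).trans_eq h.symm) hmax ha hm)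
    exact (hmax ha).lt_of_ne hval_ne
  · have hmin := hf.lt_on_openSegment ha hm ham.ne
      (openSegment_eq_Ioo ham ▸ ⟨hab, hbm⟩ : b ∈ openSegment 𝕜 a m)
    rwa [min_eq_left (hmax ha)] at hmin

theorem strictMonoOn_lineMap_of_isMaxOn {s : Set E} {f : E → β} {x y : E}
    (hf : StrictConcaveOn 𝕜 s f) (hx : x ∈ s) (hy : y ∈ s) (hmax : IsMaxOn f s y) (hxy : x ≠ y) :
    StrictMonoOn (fun t : 𝕜 => f (AffineMap.lineMap x y t)) (Set.Icc 0 1) := by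
  have hline := strictConcaveOn_comp_affineMap hf (AffineMap.lineMap_injective 𝕜 hxy)
  refine (strictMonoOn_inter_Iic_of_isMaxOn hline (m := 1) (by simpa using hy) ?_).mono
    fun t ht => ⟨hf.1.lineMap_mem hx hy ht, ht.2⟩
  exact fun t ht => by simpa using hmax ht

end LinearOrderedField

end StrictConcave

section ShannonEntropy

theorem hfun_eq_smul_negMulLog : hfun = fun x => (Real.log 2)⁻¹ • Real.negMulLog x := by
  ext x
  simp only [hfun, Real.logb, Real.negMulLog, smul_eq_mul]
  ring

theorem strictConcaveOn_hfun : StrictConcaveOn ℝ (Set.Ici 0) hfun :=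
  hfun_eq_smul_negMulLog ▸ strictConcaveOn_const_smul
    (inv_pos.2 (Real.log_pos one_lt_two)) Real.strictConcaveOn_negMulLog

variable {m : ℕ}

theorem strictConcaveOn_shannonEntropy :
    StrictConcaveOn ℝ (stdSimplex ℝ (Fin m)) shannonEntropy :=
  (strictConcaveOn_sum_apply strictConcaveOn_hfun).subset (fun _ hp i _ => hp.1 i)
    (convex_stdSimplex ℝ (Fin m))

theorem isMaxOn_shannonEntropy_barycenter [NeZero m] :
    IsMaxOn shannonEntropy (stdSimplex ℝ (Fin m))
      (stdSimplex.barycenter : stdSimplex ℝ (Fin m)).val := by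
  intro p hp
  have hJensen := sum_le_card_smul_map_average strictConcaveOn_hfun.concaveOn hp.1
  simpa [shannonEntropy, hp.2] using hJensen

end ShannonEntropy

section ChainDist

variable {N : Type*} (v w : Finset N → ℝ) {m : ℕ} (c : Fin (m + 1) → Finset N)

theorem sum_chainDist : ∑ i, chainDist v c i = v (c (Fin.last m)) - v (c 0) := by
  simp only [chainDist, sum_sub_distrib]
  linear_combination Fin.sum_univ_castSucc (fun i => v (c i)) - Fin.sum_univ_succ fun i => v (c i)

theorem chainDist_lineMap (t : ℝ) :
    chainDist (AffineMap.lineMap v w t) c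
      = AffineMap.lineMap (chainDist v c) (chainDist w c) t := by
  ext i
  simp only [chainDist, AffineMap.lineMap_apply_module, Pi.add_apply, Pi.smul_apply, smul_eq_mul]
  ring

variable {v w c} in
theorem apply_eq_of_chainDist_eq (h : chainDist v c = chainDist w c) (h0 : v (c 0) = w (c 0))
    (i : Fin (m + 1)) : v (c i) = w (c i) := by
  induction i using Fin.induction with
  | zero => exact h0
  | succ i ih =>
    have hi : v (c i.succ) - v (c i.castSucc) = w (c i.succ) - w (c i.castSucc) := congrFun h i
    linarith

end ChainDist

section RegularSetSystem

variable {N : Type*} [Fintype N] {S : Finset (Finset N)}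

theorem card_apply_of_strictMono {c : Fin (Fintype.card N + 1) → Finset N}
    (hc : StrictMono c) (i : Fin (Fintype.card N + 1)) : (c i).card = i := by
  let cardFin : Fin (Fintype.card N + 1) → Fin (Fintype.card N + 1) :=
    fun i => ⟨(c i).card, Nat.lt_succ_of_le (card_le_univ _)⟩
  have hcardFin : StrictMono cardFin := fun _ _ hij => card_lt_card (hc hij)
  exact congrArg Fin.val (congrFun hcardFin.eq_id i)

theorem exists_isMaxChainOf_apply_eq (hempty : ∅ ∈ S) (huniv : univ ∈ S)
    {A : Finset N} (hA : A ∈ S) : ∃ m c, IsMaxChainOf S m c ∧ ∃ i, c i = A := by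
  let _ : BoundedOrder S :=
    { bot := ⟨∅, hempty⟩, bot_le := fun B => empty_subset B.1
      top := ⟨univ, huniv⟩, le_top := fun B => subset_univ B.1 }
  obtain ⟨t, i, hti, hhead, hlast⟩ :=
    LTSeries.exists_relSeries_covBy_and_head_eq_bot_and_last_eq_bot
      (RelSeries.singleton _ (⟨A, hA⟩ : S))
  have hmax : IsMaxChainOf S t.length fun j => (t j).1 :=
    ⟨congrArg Subtype.val hhead, congrArg Subtype.val hlast, fun j => (t j).2,
      fun j => (t.step j).1, fun j B hB hjB => (t.step j).2 (c := ⟨B, hB⟩) hjB.1 hjB.2⟩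
  exact ⟨t.length, _, hmax, i 0, congrArg Subtype.val (congrFun hti 0)⟩

theorem mem_maxChains {c : Fin (Fintype.card N + 1) → Finset N} :
    c ∈ maxChains S ↔ IsMaxChainOf S (Fintype.card N) c := by
  simp [maxChains]

theorem IsMaxChainOf.strictMono {m : ℕ} {c : Fin (m + 1) → Finset N} (hc : IsMaxChainOf S m c) :
    StrictMono c :=
  Fin.strictMono_iff_lt_succ.2 hc.2.2.2.1

theorem IsRegularSetSystem.exists_mem_maxChains_apply_eq (hS : IsRegularSetSystem S)
    {A : Finset N} (hA : A ∈ S) : ∃ c ∈ maxChains S, ∃ i, c i = A := by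
  obtain ⟨m, c, hc, hcA⟩ := exists_isMaxChainOf_apply_eq hS.1 hS.2.1 hA
  obtain rfl := hS.2.2 m c hc
  exact ⟨c, mem_maxChains.2 hc, hcA⟩

end RegularSetSystem

section Capacity

variable {N : Type*} [Fintype N]

/-- The additive uniform capacity `v*`, the endpoint at `λ = 1` of the segment `v_λ`. On an empty
ground set the division by zero makes it `0`, which is not a capacity. -/
noncomputable def uniformCapacity (A : Finset N) : ℝ :=
  (A.card : ℝ) / (Fintype.card N : ℝ)

variable {S : Finset (Finset N)} {v : Finset N → ℝ}

theorem IsCapacity.nonempty (hv : IsCapacity S v) : Nonempty N := by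
  by_contra! hN
  have huniv : v univ = 0 := univ_eq_empty (α := N) ▸ hv.1
  exact zero_ne_one (huniv.symm.trans hv.2.1)

theorem IsCapacity.chainDist_mem_stdSimplex (hv : IsCapacity S v) {m : ℕ}
    {c : Fin (m + 1) → Finset N} (hc : IsMaxChainOf S m c) :
    chainDist v c ∈ stdSimplex ℝ (Fin m) := by
  obtain ⟨hv_empty, hv_univ, -, hv_mono⟩ := hv
  refine ⟨fun i => sub_nonneg.2 ?_, ?_⟩
  · exact hv_mono _ (hc.2.2.1 _) _ (hc.2.2.1 _) (hc.2.2.2.1 i).subset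
  · rw [sum_chainDist, hc.1, hc.2.1, hv_empty, hv_univ, sub_zero]

theorem chainDist_uniformCapacity [NeZero (Fintype.card N)]
    {c : Fin (Fintype.card N + 1) → Finset N} (hc : StrictMono c) :
    chainDist uniformCapacity c
      = (stdSimplex.barycenter : stdSimplex ℝ (Fin (Fintype.card N))).val := by
  ext i
  simp only [chainDist, uniformCapacity, card_apply_of_strictMono hc, Fin.val_succ,
    Fin.val_castSucc, Nat.cast_add, Nat.cast_one, stdSimplex.barycenter_apply, Fintype.card_fin]
  ring

theorem IsRegularSetSystem.exists_chainDist_ne (hS : IsRegularSetSystem S) (hv_empty : v ∅ = 0)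
    (hne : ∃ A ∈ S, v A ≠ uniformCapacity A) :
    ∃ c ∈ maxChains S, chainDist v c ≠ chainDist uniformCapacity c := by
  obtain ⟨A, hA, hvA⟩ := hne
  obtain ⟨c, hc, i, rfl⟩ := hS.exists_mem_maxChains_apply_eq hA
  refine ⟨c, hc, fun h => hvA (apply_eq_of_chainDist_eq h ?_ i)⟩
  rw [(mem_maxChains.1 hc).1, hv_empty]
  simp [uniformCapacity]

theorem IsCapacity.strictMonoOn_shannonEntropy_chainDist (hv : IsCapacity S v)
    {c : Fin (Fintype.card N + 1) → Finset N} (hc : IsMaxChainOf S (Fintype.card N) c)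
    (hne : chainDist v c ≠ chainDist uniformCapacity c) :
    StrictMonoOn
      (fun t : ℝ => shannonEntropy (chainDist (AffineMap.lineMap v uniformCapacity t) c))
      (Set.Icc 0 1) := by
  have := hv.nonempty
  have hbary := chainDist_uniformCapacity hc.strictMono
  simp only [chainDist_lineMap, hbary] at hne ⊢
  exact strictMonoOn_lineMap_of_isMaxOn strictConcaveOn_shannonEntropy
    (hv.chainDist_mem_stdSimplex hc) (Subtype.coe_prop _) isMaxOn_shannonEntropy_barycenter hne

theorem IsCapacity.monotoneOn_shannonEntropy_chainDist (hv : IsCapacity S v)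
    {c : Fin (Fintype.card N + 1) → Finset N} (hc : IsMaxChainOf S (Fintype.card N) c) :
    MonotoneOn
      (fun t : ℝ => shannonEntropy (chainDist (AffineMap.lineMap v uniformCapacity t) c))
      (Set.Icc 0 1) := by
  by_cases hne : chainDist v c = chainDist uniformCapacity c
  · simpa only [chainDist_lineMap, hne, AffineMap.lineMap_same_apply] using monotoneOn_const
  · exact (hv.strictMonoOn_shannonEntropy_chainDist hc hne).monotoneOn

end Capacity

theorem capEntropy_strictMono_toward_uniform_general {N : Type*} [Fintype N]
    {S : Finset (Finset N)} (hS : IsRegularSetSystem S)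
    {v : Finset N → ℝ} (hv : IsCapacity S v)
    (hne : ∃ A ∈ S, v A ≠ uniformCapacity A) :
    StrictMonoOn (fun t : ℝ => capEntropy S (AffineMap.lineMap v uniformCapacity t))
      (Set.Icc 0 1) := by
  obtain ⟨c, hc, hc_ne⟩ := hS.exists_chainDist_ne hv.1 hne
  intro a ha b hb hab
  have hcard : (0 : ℝ) < (maxChains S).card := Nat.cast_pos.2 (card_pos.2 ⟨c, hc⟩)
  refine mul_lt_mul_of_pos_left (sum_lt_sum (fun d hd => ?_) ⟨c, hc, ?_⟩) (one_div_pos.2 hcard)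
  · exact hv.monotoneOn_shannonEntropy_chainDist (mem_maxChains.1 hd) ha hb hab.le
  · exact hv.strictMonoOn_shannonEntropy_chainDist (mem_maxChains.1 hc) hc_ne ha hb hab

/-- for a capacity `v ≢ v*` on a regular set system, the entropy of
`v_λ := (1 - λ) v + λ v*` is strictly increasing in `λ` on `(0, 1)`, where
`v*(A) = |A| / n` is the additive uniform capacity. -/
theorem capEntropy_strictMono_toward_uniform (S : Finset (Finset α))
    (hS : IsRegularSetSystem S) (hn : 1 ≤ Fintype.card α)
    (v : Finset α → ℝ) (hv : IsCapacity S v)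
    (hne : ∃ A ∈ S, v A ≠ (A.card : ℝ) / (Fintype.card α : ℝ))
    (lam₁ lam₂ : ℝ) (h₁ : 0 < lam₁) (h₁₂ : lam₁ < lam₂) (h₂ : lam₂ < 1) :
    capEntropy S
        (fun A => (1 - lam₁) * v A + lam₁ * ((A.card : ℝ) / (Fintype.card α : ℝ)))
      < capEntropy S
        (fun A => (1 - lam₂) * v A + lam₂ * ((A.card : ℝ) / (Fintype.card α : ℝ))) := by
  simpa only [AffineMap.lineMap_apply_module] using!
    capEntropy_strictMono_toward_uniform_general hS hv hne
      ⟨h₁.le, (h₁₂.trans h₂).le⟩ ⟨(h₁.trans h₁₂).le, h₂.le⟩ h₁₂
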